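/- For every number field K, the class number h_K of K satisfies h_K ≤ |Δ_K|^{3/2}, where Δ_K is the discriminant of K. -/

import Mathlib

open Module NumberField Ideal UniqueFactorizationMonoid

theorem aux_norm {K : Type*} [Field K] [NumberField K] {P : Ideal (𝓞 K)} (hP : Prime P) :
    ∃ p k : ℕ, p.Prime ∧ k ≠ 0 ∧ absNorm P = p ^ k ∧ (absNorm P).minFac = p ∧ (p : 𝓞 K) ∈ P := by
  have hpr : P.IsPrime := isPrime_of_prime hP
  have : P.IsMaximal := hpr.isMaximal hP.ne_zero
  obtain ⟨p, k, hk, hm, hp, h⟩ := Ideal.exists_prime_and_absNorm_eq_pow P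
  refine ⟨p, k, hp, hk.ne', h, ?_, hm⟩
  rw [h, Nat.pow_minFac hk.ne', hp.minFac_eq]

theorem aux_card {K : Type*} [Field K] [NumberField K] (p : ℕ) (T : Finset (Ideal (𝓞 K)))
    (hT : ∀ P ∈ T, Prime P ∧ (absNorm P).minFac = p) : T.card ≤ finrank ℚ K := by
  rcases T.eq_empty_or_nonempty with rfl | ⟨P₀, hP₀⟩
  · simp
  have hp : p.Prime := by
    obtain ⟨q, k, hq, -, -, h, -⟩ := aux_norm (hT _ hP₀).1
    rwa [← (hT _ hP₀).2, h]
  have h1 : ∏ P ∈ T, P ∣ span {(p : 𝓞 K)} := by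
    refine Finset.prod_primes_dvd _ (fun P hP => (hT P hP).1) fun P hP => ?_
    obtain ⟨q, k, hq, -, -, h, hm⟩ := aux_norm (hT _ hP).1
    rw [Ideal.dvd_span_singleton]
    rwa [← h, (hT _ hP).2] at hm
  have h2 : ∏ P ∈ T, absNorm P ∣ p ^ finrank ℚ K := by
    rw [← map_prod, ← RingOfIntegers.rank K, ← absNorm_span_natCast]
    exact map_dvd _ h1
  have h3 : p ^ T.card ∣ ∏ P ∈ T, absNorm P := by
    rw [← Finset.prod_const]
    refine Finset.prod_dvd_prod_of_dvd _ _ fun P hP => ?_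
    rw [← (hT P hP).2]
    exact Nat.minFac_dvd _
  exact (Nat.pow_dvd_pow_iff_le_right hp.one_lt).1 (h3.trans h2)

theorem aux_index (K : Type*) [Field K] [NumberField K] :
    ∃ f : Ideal (𝓞 K) → Fin (finrank ℚ K), ∀ P Q, Prime P → Prime Q →
      (absNorm P).minFac = (absNorm Q).minFac → f P = f Q → P = Q := by
  have hn : 0 < finrank ℚ K := finrank_pos
  have key : ∀ p : ℕ, ∃ f : Ideal (𝓞 K) → Fin (finrank ℚ K),
      Set.InjOn f {P | Prime P ∧ (absNorm P).minFac = p} := by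
    classical
    intro p
    have hfin : {P : Ideal (𝓞 K) | Prime P ∧ (absNorm P).minFac = p}.Finite := by
      by_contra hinf
      obtain ⟨T, hT, hc⟩ := Set.Infinite.exists_subset_card_eq hinf (finrank ℚ K + 1)
      have := aux_card p T (fun P hP => hT hP)
      omega
    have hc := aux_card p hfin.toFinset (fun P hP => by simpa using hP)
    obtain ⟨e⟩ : Nonempty (hfin.toFinset ↪ Fin (finrank ℚ K)) :=
      Function.Embedding.nonempty_of_card_le (by simpa using hc)
    refine ⟨fun P => if h : P ∈ hfin.toFinset then e ⟨P, h⟩ else ⟨0, hn⟩, ?_⟩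
    intro P hP Q hQ h
    have hP' : P ∈ hfin.toFinset := hfin.mem_toFinset.2 hP
    have hQ' : Q ∈ hfin.toFinset := hfin.mem_toFinset.2 hQ
    simp only [hP', hQ', dif_pos] at h
    simpa using e.injective h
  choose f hf using key
  refine ⟨fun P => f (absNorm P).minFac P, fun P Q hP hQ h h' => ?_⟩
  simp only [← h] at h'
  exact hf _ ⟨hP, rfl⟩ ⟨hQ, h.symm⟩ h'

open Classical in
/-- The `i`-th component of the norm. -/
noncomputable def auxM {K : Type*} [Field K] [NumberField K]
    (f : Ideal (𝓞 K) → Fin (finrank ℚ K)) (I : Ideal (𝓞 K)) (i : Fin (finrank ℚ K)) : ℕ :=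
  ((normalizedFactors I).map fun P => if f P = i then absNorm P else 1).prod

theorem auxM_prod {K : Type*} [Field K] [NumberField K]
    (f : Ideal (𝓞 K) → Fin (finrank ℚ K)) {I : Ideal (𝓞 K)} (hI : I ≠ 0) :
    ∏ i, auxM f I i = absNorm I := by
  classical
  unfold auxM
  conv_rhs => rw [← Ideal.prod_normalizedFactors_eq_self hI, map_multiset_prod]
  induction normalizedFactors I using Multiset.induction_on with
  | empty => simp
  | cons Q s ih =>
    simp only [Multiset.map_cons, Multiset.prod_cons, Finset.prod_mul_distrib, ih]
    simp

theorem aux_fact {K : Type*} [Field K] [NumberField K]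
    (f : Ideal (𝓞 K) → Fin (finrank ℚ K)) (hf : ∀ P Q, Prime P → Prime Q →
      (absNorm P).minFac = (absNorm Q).minFac → f P = f Q → P = Q)
    {P : Ideal (𝓞 K)} (hP : Prime P) (s : Multiset (Ideal (𝓞 K))) (hs : ∀ Q ∈ s, Prime Q) :
    open Classical in
    ((s.map fun Q => if f Q = f P then absNorm Q else 1).prod).factorization (absNorm P).minFac
      = s.count P * (absNorm P).factorization (absNorm P).minFac := by
  classical
  induction s using Multiset.induction_on with
  | empty => simp
  | cons Q s ih =>
    have hQ := hs Q (by simp)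
    have hs' : ∀ Q ∈ s, Prime Q := fun R hR => hs R (by simp [hR])
    have hne : ∀ Q : Ideal (𝓞 K), Prime Q → (if f Q = f P then absNorm Q else 1) ≠ 0 := by
      intro Q hQ
      split_ifs
      · rw [Ne, absNorm_eq_zero_iff]; exact hQ.ne_zero
      · simp
    rw [Multiset.map_cons, Multiset.prod_cons, Nat.factorization_mul (hne Q hQ), Finsupp.add_apply,
      ih hs', Multiset.count_cons]
    · by_cases hQP : P = Q
      · subst hQP; simp; ring
      · simp only [hQP, if_false, add_zero, Nat.add_eq_right]
        split_ifs with h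
        · obtain ⟨q, k, hq, hk, h1, h2, -⟩ := aux_norm hQ
          obtain ⟨p, l, hp, hl, h3, h4, -⟩ := aux_norm hP
          have : q ≠ p := by
            rintro rfl
            exact hQP (hf P Q hP hQ (by rw [h2, h4]) h.symm)
          rw [h4, h1, hq.factorization_pow]
          simp [this]
        · simp
    · rw [Ne, Multiset.prod_eq_zero_iff, Multiset.mem_map]
      rintro ⟨R, hR, h⟩
      exact hne R (hs' R hR) h

theorem auxM_inj {K : Type*} [Field K] [NumberField K]
    (f : Ideal (𝓞 K) → Fin (finrank ℚ K)) (hf : ∀ P Q, Prime P → Prime Q →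
      (absNorm P).minFac = (absNorm Q).minFac → f P = f Q → P = Q)
    {I J : Ideal (𝓞 K)} (hI : I ≠ 0) (hJ : J ≠ 0) (h : auxM f I = auxM f J) : I = J := by
  classical
  rw [← Ideal.prod_normalizedFactors_eq_self hI, ← Ideal.prod_normalizedFactors_eq_self hJ]
  congr 1
  ext P
  by_cases hP : Prime P
  · have h1 := aux_fact f hf hP (normalizedFactors I) (fun Q => prime_of_normalized_factor Q)
    have h2 := aux_fact f hf hP (normalizedFactors J) (fun Q => prime_of_normalized_factor Q)
    have h3 := congrFun h (f P)
    unfold auxM at h3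
    rw [h3, h2] at h1
    have h4 : (absNorm P).factorization (absNorm P).minFac ≠ 0 := by
      obtain ⟨p, l, hp, hl, h3, h4, -⟩ := aux_norm hP
      rw [h4, h3, hp.factorization_pow]
      simpa using hl
    exact (Nat.eq_of_mul_eq_mul_right (Nat.pos_of_ne_zero h4) h1).symm
  · rw [Multiset.count_eq_zero_of_notMem, Multiset.count_eq_zero_of_notMem]
    · exact fun h => hP (prime_of_normalized_factor _ h)
    · exact fun h => hP (prime_of_normalized_factor _ h)

open Real in
theorem aux_count {K : Type*} [Field K] [NumberField K] (T : Finset (Ideal (𝓞 K)))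
    (x : ℝ) (hT : ∀ I ∈ T, I ≠ 0 ∧ (absNorm I : ℝ) ≤ x) :
    (T.card : ℝ) ≤ x ^ 2 * (π ^ 2 / 6) ^ finrank ℚ K := by
  classical
  obtain ⟨f, hf⟩ := aux_index K
  have h1 : (T.card : ℝ) ≤ ∑ I ∈ T, x ^ 2 * ∏ i, (1 / (auxM f I i : ℝ) ^ 2) := by
    rw [Finset.card_eq_sum_ones]
    push_cast
    refine Finset.sum_le_sum fun I hI => ?_
    obtain ⟨h0, hx⟩ := hT I hI
    have hpos : (0 : ℝ) < absNorm I := by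
      have : absNorm I ≠ 0 := by rw [Ne, absNorm_eq_zero_iff]; exact h0
      positivity
    rw [Finset.prod_div_distrib, Finset.prod_pow, ← Nat.cast_prod, auxM_prod f h0]
    rw [Finset.prod_const_one, mul_one_div, le_div_iff₀ (by positivity), one_mul]
    gcongr
  refine h1.trans ?_
  rw [← Finset.mul_sum]
  gcongr
  have h2 : ∑ I ∈ T, ∏ i, (1 / (auxM f I i : ℝ) ^ 2)
      = ∑ m ∈ T.image (auxM f), ∏ i, (1 / (m i : ℝ) ^ 2) := by
    rw [Finset.sum_image]
    intro I hI J hJ h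
    exact auxM_inj f hf (hT I hI).1 (hT J hJ).1 h
  rw [h2]
  let S : Finset ℕ := (T.image (auxM f)).biUnion fun m => Finset.univ.image m
  have h3 : T.image (auxM f) ⊆ Fintype.piFinset fun _ => S := by
    intro m hm
    rw [Fintype.mem_piFinset]
    intro i
    exact Finset.mem_biUnion.2 ⟨m, hm, Finset.mem_image_of_mem _ (Finset.mem_univ i)⟩
  calc _ ≤ ∑ m ∈ Fintype.piFinset fun _ : Fin (finrank ℚ K) => S, ∏ i, (1 / (m i : ℝ) ^ 2) :=
        Finset.sum_le_sum_of_subset_of_nonneg h3 (fun m _ _ => by positivity)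
    _ = ∏ i : Fin (finrank ℚ K), ∑ k ∈ S, (1 / (k : ℝ) ^ 2) := by
        rw [Finset.prod_univ_sum]
    _ = (∑ k ∈ S, (1 / (k : ℝ) ^ 2)) ^ finrank ℚ K := by simp
    _ ≤ _ := by
        gcongr
        exact sum_le_hasSum S (fun k _ => by positivity) hasSum_zeta_two

theorem aux_fac (n : ℕ) (hn : 1 ≤ n) : n.factorial * 2 ^ n ≤ 2 * n ^ n := by
  induction n, hn using Nat.le_induction with
  | base => simp
  | succ n hn ih =>
    have h : 2 * n ^ n ≤ (n + 1) ^ n := by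
      obtain ⟨m, rfl⟩ : ∃ m, n = m + 1 := ⟨n - 1, by omega⟩
      have h1 : (m + 1) ^ (m + 1) + (m + 1) * (m + 1) ^ m ≤ (m + 1 + 1) ^ (m + 1) := by
        have := pow_add_mul_le_add_pow (a := m + 1) (b := 1) (Nat.zero_le _) (Nat.zero_le _) (m + 1)
        simpa using this
      rw [pow_succ] at h1 ⊢
      linarith
    rw [Nat.factorial_succ, pow_succ, pow_succ]
    nlinarith

open Real in
theorem aux_num (n r : ℕ) (hn : 2 ≤ n) (hr : 2 * r ≤ n) (A : ℝ)
    (hA : A = (4 / π) ^ r * (n.factorial / (n : ℝ) ^ n)) :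
    A ^ 3 * (π ^ 2 / 6) ^ n ≤ 1 := by
  have hpi := Real.pi_pos
  have hpi3 := Real.pi_gt_three
  have hpi4 := Real.pi_lt_d2
  have hA0 : 0 ≤ A := by rw [hA]; positivity
  have hc : 1 ≤ 4 / π := by rw [le_div_iff₀ hpi]; linarith
  have h1 : (n.factorial / (n : ℝ) ^ n) ≤ 2 / 2 ^ n := by
    rw [div_le_div_iff₀ (by positivity) (by positivity)]
    exact_mod_cast aux_fac n (by omega)
  have h2 : A ^ 2 ≤ (4 / π) ^ n * (2 / 2 ^ n) ^ 2 := by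
    rw [hA, mul_pow, ← pow_mul]
    gcongr
    · omega
  have h3 : (A ^ 3 * (π ^ 2 / 6) ^ n) ^ 2 ≤ 1 := by
    calc (A ^ 3 * (π ^ 2 / 6) ^ n) ^ 2 = (A ^ 2) ^ 3 * ((π ^ 2 / 6) ^ n) ^ 2 := by ring
      _ ≤ ((4 / π) ^ n * (2 / 2 ^ n) ^ 2) ^ 3 * ((π ^ 2 / 6) ^ n) ^ 2 := by gcongr
      _ = 64 * (((4 / π) * (1 / 2) ^ 2) ^ 3 * (π ^ 2 / 6) ^ 2) ^ n := by
        have : (2 : ℝ) / 2 ^ n = 2 * (1 / 2) ^ n := by rw [one_div, inv_pow]; rfl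
        rw [this]
        simp only [mul_pow, ← pow_mul]
        ring_nf
      _ = 64 * (π / 36) ^ n := by
        congr 2; field_simp; norm_num
      _ ≤ 64 * (π / 36) ^ 2 := by
        gcongr ?_ * ?_
        exact pow_le_pow_of_le_one (by positivity) (by linarith) hn
      _ ≤ 1 := by nlinarith
  exact (sq_le_one_iff₀ (by positivity)).1 h3

/-- Lenstra's bound: the class number of a number field `K` is at most `|Δ_K|^{3/2}`. -/
theorem classNumber_le_discr_pow (K : Type*) [Field K] [NumberField K] :
    (NumberField.classNumber K : ℝ) ≤ |(NumberField.discr K : ℝ)| ^ ((3 : ℝ) / 2) := by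
  classical
  set d : ℝ := |(NumberField.discr K : ℝ)| with hd
  have hd1 : 1 ≤ d := by
    rw [hd]
    exact_mod_cast Int.one_le_abs (discr_ne_zero K)
  set n := finrank ℚ K with hn
  set r := InfinitePlace.nrComplexPlaces K with hr
  set A : ℝ := (4 / Real.pi) ^ r * (n.factorial / (n : ℝ) ^ n) with hA
  choose g hg1 hg2 using fun C => exists_ideal_in_class_of_norm_le (K := K) C
  have hcount : (classNumber K : ℝ) ≤ (A * √d) ^ 2 * (Real.pi ^ 2 / 6) ^ n := by
    have hinj : Function.Injective (fun C => (g C : Ideal (𝓞 K))) := by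
      intro C D h
      rw [← hg1 C, ← hg1 D, Subtype.ext h]
    have := aux_count (K := K) (Finset.univ.image fun C => (g C : Ideal (𝓞 K))) (A * √d) (by
      intro I hI
      obtain ⟨C, -, rfl⟩ := Finset.mem_image.1 hI
      refine ⟨nonZeroDivisors.coe_ne_zero (g C), ?_⟩
      have := hg2 C
      rw [hA, mul_assoc]
      simpa [hd] using this)
    rwa [Finset.card_image_of_injective _ hinj, Finset.card_univ] at this
  have hn0 : 0 < n := finrank_pos
  have hrpow : d ^ ((3 : ℝ) / 2) = d * √d := by
    rw [Real.sqrt_eq_rpow, ← Real.rpow_one_add' (by linarith) (by norm_num)]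
    norm_num
  rcases Nat.lt_or_ge 1 n with hn2 | hn1
  · have hApos : 0 < A := by positivity
    have hr2 : 2 * r ≤ n := by
      have := InfinitePlace.card_add_two_mul_card_eq_rank K
      omega
    have h1 := aux_num n r hn2 hr2 A hA
    have h2 : 1 ≤ A * √d := by
      have := abs_discr_ge' K
      have h4 : 1 ≤ (A * √d) ^ 2 := by
        rw [mul_pow, Real.sq_sqrt (by linarith), hA]
        push_cast at this
        rw [← hn, ← hr, ← hd, div_le_iff₀ (by positivity)] at this
        rw [mul_pow, div_pow (n.factorial : ℝ), ← pow_mul, ← pow_mul, mul_comm r, mul_comm n,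
          mul_div_assoc', div_mul_eq_mul_div, le_div_iff₀ (by positivity)]
        linarith
      exact (one_le_sq_iff₀ (by positivity)).1 h4
    rw [hrpow]
    refine hcount.trans ?_
    calc (A * √d) ^ 2 * (Real.pi ^ 2 / 6) ^ n = d * (A ^ 2 * (Real.pi ^ 2 / 6) ^ n) * 1 := by
          rw [mul_pow, Real.sq_sqrt (by linarith)]; ring
      _ ≤ d * (A ^ 2 * (Real.pi ^ 2 / 6) ^ n) * (A * √d) := by gcongr
      _ = d * √d * (A ^ 3 * (Real.pi ^ 2 / 6) ^ n) := by ring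
      _ ≤ d * √d * 1 := by gcongr
      _ = _ := mul_one _
  · have hn1 : n = 1 := by omega
    have hall : (Fintype.card (ClassGroup (𝓞 K))) ≤ 1 := by
      have hb : Function.Bijective (algebraMap ℚ K) :=
        Algebra.finrank_eq_one_iff_bijective_algebraMap.mp hn1
      let e : ℚ ≃+* K := RingEquiv.ofBijective (algebraMap ℚ K) hb
      have hQ : IsPrincipalIdealRing (𝓞 ℚ) := classNumber_eq_one_iff.1 Rat.classNumber_eq
      have hK : IsPrincipalIdealRing (𝓞 K) := IsPrincipalIdealRing.of_surjective
        (RingOfIntegers.mapRingEquiv e) (RingOfIntegers.mapRingEquiv e).surjective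
      exact (classNumber_eq_one_iff.2 hK).le
    calc (classNumber K : ℝ) ≤ 1 := by exact_mod_cast hall
      _ ≤ _ := Real.one_le_rpow hd1 (by norm_num)
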